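/- arXiv:0712.0123 — 2 statements merged into one kernel-verified Lean document; each statement's English description precedes it below -/
import Mathlib

section
/- Let R be a commutative ring, G a finite abelian group, and RG the group ring of G over R; regard R as an RG-module via the augmentation map RG → R sending each element of G to 1. If R has finite projective dimension as an RG-module, then the global cotorsion dimensions of R and RG coincide: for every nonnegative integer n, every flat RG-module has projective dimension at most n over RG if and only if every flat R-module has projective dimension at most n over R. -/
open CategoryTheory

noncomputable section

universe u

/-- The `j`-th Ext group of the `R`-modules `M` and `N`. -/
def extGroup (R : Type u) [CommRing R] (M N : ModuleCat.{u} R) (j : ℕ) : ModuleCat R :=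
  ((Ext R (ModuleCat.{u} R) j).obj (Opposite.op M)).obj N

/-- `Ext_R^j(M, N) = 0`. -/
def ExtVanish (R : Type u) [CommRing R] (M N : ModuleCat.{u} R) (j : ℕ) : Prop :=
  Subsingleton (extGroup R M N j)

/-- The projective dimension of `M` is at most `n`
(via the standard Ext-vanishing characterization). -/
def ProjDimLE (R : Type u) [CommRing R] (M : ModuleCat.{u} R) (n : ℕ) : Prop :=
  ∀ (N : ModuleCat.{u} R) (j : ℕ), n < j → ExtVanish R M N j

/-- `M` has finite projective dimension. -/
def HasFinProjDim (R : Type u) [CommRing R] (M : ModuleCat.{u} R) : Prop :=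
  ∃ n, ProjDimLE R M n

/-- `R` is a coherent ring: every finitely generated ideal is finitely presented. -/
def IsCoherentRing (R : Type u) [CommRing R] : Prop :=
  ∀ I : Ideal R, I.FG → Module.FinitePresentation R I
/-- The augmentation ring homomorphism `RG → R`, sending each element of `G` to `1`. -/
def augmentation (R : Type u) [CommRing R] (G : Type u) [CommGroup G] :
    MonoidAlgebra R G →+* R :=
  ((MonoidAlgebra.lift R R G) 1).toRingHom

lemma extVanish_iff {R : Type u} [CommRing R] {M : ModuleCat.{u} R}
    (P : ProjectiveResolution M) (N : ModuleCat.{u} R) (j : ℕ) :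
    ExtVanish R M N (j + 1) ↔ ∀ f : P.complex.X (j + 1) ⟶ N,
      P.complex.d (j + 2) (j + 1) ≫ f = 0 → ∃ g, P.complex.d (j + 1) j ≫ g = f := by
  unfold ExtVanish extGroup
  rw [← ModuleCat.isZero_iff_subsingleton,
    (P.isoExt (R := R) (j + 1) N).isZero_iff, ← HomologicalComplex.exactAt_iff_isZero_homology,
    HomologicalComplex.exactAt_iff' _ j (j + 1) (j + 2) (by simp) (by simp),
    ShortComplex.moduleCat_exact_iff]
  rfl

lemma projDimLE_iff {R : Type u} [CommRing R] (M : ModuleCat.{u} R) (n : ℕ) :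
    ProjDimLE R M n ↔ HasProjectiveDimensionLE M n := by
  let P := projectiveResolution M
  rw [HasProjectiveDimensionLE, hasProjectiveDimensionLT_iff]
  constructor
  · rintro h (_ | i) hi Y e
    · simp at hi
    · have h1 := (extVanish_iff P Y i).1 (h Y (i + 1) (by lia))
      obtain ⟨f, hf, rfl⟩ := P.extMk_surjective e (i + 2) (by lia)
      exact (P.extMk_eq_zero_iff f _ _ hf i rfl).2 (h1 f hf)
  · rintro h N (_ | j) hj
    · simp at hj
    · rw [extVanish_iff P]
      intro f hf
      exact (P.extMk_eq_zero_iff f (j + 2) (by lia) hf j rfl).1 (h _ (by lia) _)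

def PD (S : Type u) [CommRing S] (M : Type u) [AddCommGroup M] [Module S M] (n : ℕ) : Prop :=
  HasProjectiveDimensionLE (ModuleCat.of S M) n

lemma PD_zero {S : Type u} [CommRing S] {M : Type u} [AddCommGroup M] [Module S M] :
    PD S M 0 ↔ Module.Projective S M := by
  rw [PD, ← projective_iff_hasProjectiveDimensionLE_zero, IsProjective.iff_projective]

lemma PD_seq {S : Type u} [CommRing S] {K P M : Type u} [AddCommGroup M] [Module S M]
    [AddCommGroup K] [Module S K] [AddCommGroup P] [Module S P] [Module.Projective S P]
    (i : K →ₗ[S] P) (p : P →ₗ[S] M) (hi : Function.Injective i) (hp : Function.Surjective p)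
    (h : Function.Exact i p) (n : ℕ) : PD S M (n + 1) ↔ PD S K n := by
  have hS : (ShortComplex.mk (ModuleCat.ofHom i) (ModuleCat.ofHom p)
      (by ext x; exact h.apply_apply_eq_zero x)).ShortExact :=
    { exact := by
        rw [ShortComplex.moduleCat_exact_iff]
        intro x hx
        exact (h x).1 hx
      mono_f := (ModuleCat.mono_iff_injective _).2 hi
      epi_g := (ModuleCat.epi_iff_surjective _).2 hp }
  exact hS.hasProjectiveDimensionLT_X₃_iff n ((IsProjective.iff_projective _).1 ‹_›)

section
variable {R A : Type u} [CommRing R] [CommRing A] [Algebra R A] [Module.Free R A]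

lemma proj_down (M : Type u) [AddCommGroup M] [Module A M] [Module R M] [IsScalarTower R A M]
    [Module.Projective A M] : Module.Projective R M := by
  obtain ⟨s, hs⟩ := (Module.projective_def' (R := A) (P := M)).1 ‹_›
  refine Module.Projective.of_split (s.restrictScalars R)
    ((Finsupp.linearCombination A id).restrictScalars R) ?_
  ext x
  exact LinearMap.congr_fun hs x

lemma PD_step (M : Type u) [AddCommGroup M] [Module A M] [Module R M] [IsScalarTower R A M]
   (n : ℕ) : (PD R M (n + 1) ↔ PD R (LinearMap.ker (Finsupp.linearCombination A (id : M → M))) n)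
    ∧ (PD A M (n + 1) ↔ PD A (LinearMap.ker (Finsupp.linearCombination A (id : M → M))) n) := by
  set p := Finsupp.linearCombination A (id : M → M) with hp
  have hsurj : Function.Surjective p := fun x ↦ ⟨Finsupp.single x 1, by simp [hp]⟩
  constructor
  · refine PD_seq ((LinearMap.ker p).subtype.restrictScalars R) (p.restrictScalars R)
      (LinearMap.ker p).injective_subtype hsurj (LinearMap.exact_subtype_ker_map p) n
  · exact PD_seq (LinearMap.ker p).subtype p
      (LinearMap.ker p).injective_subtype hsurj (LinearMap.exact_subtype_ker_map p) n

lemma PD_down (n : ℕ) : ∀ (M : Type u) [AddCommGroup M] [Module A M] [Module R M]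
    [IsScalarTower R A M], PD A M n → PD R M n := by
  induction n with
  | zero =>
    intro M _ _ _ _ h
    rw [PD_zero] at *
    exact proj_down (A := A) M
  | succ n ih =>
    intro M _ _ _ _ h
    obtain ⟨h1, h2⟩ := PD_step (R := R) (A := A) M n
    exact h1.2 (ih _ (h2.1 h))

/-- If relative splitting holds for all modules, pd over `A` is bounded by that over `R`. -/
lemma PD_up (hA : ∀ (M : Type u) [AddCommGroup M] [Module A M] [Module R M]
    [IsScalarTower R A M], Module.Projective R M → Module.Projective A M) (n : ℕ) :
    ∀ (M : Type u) [AddCommGroup M] [Module A M] [Module R M]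
    [IsScalarTower R A M], PD R M n → PD A M n := by
  induction n with
  | zero =>
    intro M _ _ _ _ h
    rw [PD_zero] at *
    exact hA M h
  | succ n ih =>
    intro M _ _ _ _ h
    obtain ⟨h1, h2⟩ := PD_step (R := R) (A := A) M n
    exact h2.2 (ih _ (h1.1 h))

end

section
variable {R G : Type u} [CommRing R] [CommGroup G] [Fintype G]
variable {M N L : Type u} [AddCommGroup M] [Module (MonoidAlgebra R G) M] [Module R M]
  [IsScalarTower R (MonoidAlgebra R G) M]
  [AddCommGroup N] [Module (MonoidAlgebra R G) N] [Module R N]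
  [IsScalarTower R (MonoidAlgebra R G) N]
  [AddCommGroup L] [Module (MonoidAlgebra R G) L] [Module R L]
  [IsScalarTower R (MonoidAlgebra R G) L]

lemma avg_post (f : N →ₗ[MonoidAlgebra R G] L) (h : M →ₗ[R] N) (x : M) :
    (f.restrictScalars R ∘ₗ h).sumOfConjugatesEquivariant G x =
      f (h.sumOfConjugatesEquivariant G x) := by
  simp [LinearMap.sumOfConjugatesEquivariant_apply, LinearMap.conjugate_apply]

lemma avg_pre (f : M →ₗ[MonoidAlgebra R G] N) (h : N →ₗ[R] L) (x : M) :
    (h ∘ₗ f.restrictScalars R).sumOfConjugatesEquivariant G x =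
      h.sumOfConjugatesEquivariant G (f x) := by
  simp [LinearMap.sumOfConjugatesEquivariant_apply, LinearMap.conjugate_apply]

variable (R G M) in
/-- Higman's criterion. -/
def Higman : Prop := ∃ θ : M →ₗ[R] M, ∀ x, θ.sumOfConjugatesEquivariant G x = x

variable (R G M) in
lemma higman_free : Higman R G (M →₀ MonoidAlgebra R G) := by
  classical
  let e : MonoidAlgebra R G →ₗ[R] MonoidAlgebra R G :=
    { toFun := fun a ↦ MonoidAlgebra.single 1 (a.coeff 1)
      map_add' := fun a b ↦ by
        rw [← MonoidAlgebra.single_add]; rfl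
      map_smul' := fun r a ↦ by
        simp }
  have he : ∀ a, e a = MonoidAlgebra.single 1 (a.coeff 1) := fun _ ↦ rfl
  have h1 : ∀ a, e.sumOfConjugatesEquivariant G a = a := by
    have : e.sumOfConjugatesEquivariant G = LinearMap.id := by
      refine LinearMap.ext_ring ?_
      rw [LinearMap.sumOfConjugatesEquivariant_apply, Finset.sum_eq_single 1]
      · simp [LinearMap.conjugate_apply, he, MonoidAlgebra.one_def]
      · intro g _ hg
        simp [LinearMap.conjugate_apply, he, MonoidAlgebra.one_def, hg, Finsupp.single_apply]
      · simp
    intro a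
    rw [this]; rfl
  refine ⟨Finsupp.mapRange.linearMap e, fun x ↦ ?_⟩
  induction x using Finsupp.induction_linear with
  | zero => simp
  | add f g hf hg => rw [map_add, hf, hg]
  | single m a =>
    conv_rhs => rw [← h1 a]
    simp only [LinearMap.sumOfConjugatesEquivariant_apply, LinearMap.conjugate_apply,
      Finsupp.smul_single, Finsupp.mapRange.linearMap_apply, Finsupp.mapRange_single]
    exact (map_sum (Finsupp.singleAddHom m) _ _).symm

lemma higman_of_projective (h : Module.Projective (MonoidAlgebra R G) M) : Higman R G M := by
  obtain ⟨s, hs⟩ := (Module.projective_def' (R := MonoidAlgebra R G) (P := M)).1 h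
  obtain ⟨θ, hθ⟩ := higman_free R G M
  refine ⟨(Finsupp.linearCombination (MonoidAlgebra R G) (id : M → M)).restrictScalars R ∘ₗ
    (θ ∘ₗ s.restrictScalars R), fun x ↦ ?_⟩
  rw [avg_post, avg_pre, hθ]
  exact LinearMap.congr_fun hs x

lemma projective_of_higman (h : Higman R G M) (hM : Module.Projective R M) :
    Module.Projective (MonoidAlgebra R G) M := by
  obtain ⟨θ, hθ⟩ := h
  let p := Finsupp.linearCombination (MonoidAlgebra R G) (id : M → M)
  have hsurj : Function.Surjective (p.restrictScalars R) :=
    fun x ↦ ⟨Finsupp.single x 1, by simp [p]⟩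
  obtain ⟨s, hs⟩ := Module.projective_lifting_property (p.restrictScalars R) θ hsurj
  refine Module.Projective.of_split (s.sumOfConjugatesEquivariant G) p ?_
  ext x
  rw [LinearMap.comp_apply, ← avg_post, hs, hθ]
  rfl

lemma projective_of_ker (hM : Module.Projective R M)
    (hK : Module.Projective (MonoidAlgebra R G)
      (LinearMap.ker (Finsupp.linearCombination (MonoidAlgebra R G) (id : M → M)))) :
    Module.Projective (MonoidAlgebra R G) M := by
  set p := Finsupp.linearCombination (MonoidAlgebra R G) (id : M → M) with hp
  have hsurj : Function.Surjective p := fun x ↦ ⟨Finsupp.single x 1, by simp [hp]⟩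
  obtain ⟨s, hs⟩ := Module.projective_lifting_property (p.restrictScalars R) LinearMap.id hsurj
  have hs' : ∀ m, p (s m) = m := fun m ↦ LinearMap.congr_fun hs m
  let r : (M →₀ MonoidAlgebra R G) →ₗ[R] LinearMap.ker p :=
    { toFun := fun x ↦ ⟨x - s (p x), by simp [hs']⟩
      map_add' := fun x y ↦ by
        ext1; simp only [map_add, Submodule.coe_add]; abel
      map_smul' := fun c x ↦ by
        ext1
        change c • x - s (p.restrictScalars R (c • x)) = c • (x - s (p x))
        rw [map_smul, map_smul, smul_sub]; rfl }
  obtain ⟨θ, hθ⟩ := higman_of_projective (R := R) (G := G) (M := LinearMap.ker p) hK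
  let r' := LinearMap.sumOfConjugatesEquivariant (k := R) (V := LinearMap.ker p)
    (W := M →₀ MonoidAlgebra R G) G (θ ∘ₗ r)
  have hr' : ∀ x : LinearMap.ker p, r' x = x := by
    intro x
    have h1 := avg_pre (M := LinearMap.ker p) (N := M →₀ MonoidAlgebra R G)
      (L := LinearMap.ker p) (LinearMap.ker p).subtype (θ ∘ₗ r) x
    have h2 : (θ ∘ₗ r) ∘ₗ (LinearMap.ker p).subtype.restrictScalars R = θ := by
      ext1 y
      have : r y = y := by
        ext1
        change (y : M →₀ MonoidAlgebra R G) - s (p y) = y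
        rw [LinearMap.mem_ker.1 y.2, map_zero, sub_zero]
      simp [this]
    rw [h2, hθ] at h1
    exact h1.symm
  have hex : Function.Exact (LinearMap.ker p).subtype p := LinearMap.exact_subtype_ker_map p
  obtain ⟨l, hl⟩ : ∃ l, p ∘ₗ l = LinearMap.id :=
    (List.TFAE.out (Function.Exact.split_tfae (R := MonoidAlgebra R G)
      (M := LinearMap.ker p) (f := (LinearMap.ker p).subtype) (g := p) hex (LinearMap.ker p).injective_subtype hsurj) 0 1 rfl rfl).2
      ⟨r', by ext1 x; exact hr' x⟩
  exact Module.Projective.of_split l p hl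

variable (R G) in
lemma projective_of_PD (n : ℕ) : ∀ (M : Type u) [AddCommGroup M] [Module (MonoidAlgebra R G) M]
    [Module R M] [IsScalarTower R (MonoidAlgebra R G) M], Module.Projective R M →
    PD (MonoidAlgebra R G) M n → Module.Projective (MonoidAlgebra R G) M := by
  induction n with
  | zero => intro M _ _ _ _ _ h; exact PD_zero.1 h
  | succ n ih =>
    intro M _ _ _ _ hM h
    obtain ⟨h1, h2⟩ := PD_step (R := R) (A := MonoidAlgebra R G) M n
    refine projective_of_ker hM (ih _ ?_ (h2.1 h))
    -- the kernel is `R`-projective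
    have h3 := (PD_step (R := R) (A := MonoidAlgebra R G) M 0).1
    refine PD_zero.1 (h3.1 ?_)
    have := PD_zero.2 hM
    unfold PD at *
    infer_instance

lemma higman_of_isUnit (h : IsUnit (Fintype.card G : R)) : Higman R G M := by
  obtain ⟨u, hu⟩ := h.exists_left_inv
  refine ⟨u • LinearMap.id, fun x ↦ ?_⟩
  rw [LinearMap.sumOfConjugatesEquivariant_apply]
  have : ∀ g : G, (u • (LinearMap.id : M →ₗ[R] M)).conjugate g x = u • x := by
    intro g
    rw [LinearMap.conjugate_apply, LinearMap.smul_apply, LinearMap.id_apply, smul_comm,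
      smul_smul, MonoidAlgebra.single_mul_single]
    simp [← MonoidAlgebra.one_def]
  simp only [this, Finset.sum_const, Finset.card_univ]
  rw [← Nat.cast_smul_eq_nsmul R, smul_smul, mul_comm, hu, one_smul]

end

lemma isUnit_of_fin (R : Type u) [CommRing R] (G : Type u) [CommGroup G] [Fintype G]
    (hfin : letI : Module (MonoidAlgebra R G) R := Module.compHom R (augmentation R G)
      HasFinProjDim (MonoidAlgebra R G) (ModuleCat.of (MonoidAlgebra R G) R)) :
    IsUnit (Fintype.card G : R) := by
  letI : Module (MonoidAlgebra R G) R := Module.compHom R (augmentation R G)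
  have hsm : ∀ (a : MonoidAlgebra R G) (x : R), a • x = augmentation R G a * x := fun _ _ ↦ rfl
  have hsingle : ∀ (g : G) (r : R), augmentation R G (MonoidAlgebra.single g r) = r := by
    intro g r
    simp [augmentation]
  haveI : IsScalarTower R (MonoidAlgebra R G) R := ⟨fun r a x ↦ by
    rw [hsm, hsm, smul_eq_mul, ← mul_assoc]
    congr 1
    simp [augmentation]⟩
  obtain ⟨n, hn⟩ := hfin
  rw [projDimLE_iff] at hn
  obtain ⟨θ, hθ⟩ := higman_of_projective
    (projective_of_PD R G n R inferInstance hn)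
  have h1 := hθ 1
  rw [LinearMap.sumOfConjugatesEquivariant_apply] at h1
  simp only [LinearMap.conjugate_apply, hsm, hsingle, one_mul, Finset.sum_const,
    Finset.card_univ, nsmul_eq_mul] at h1
  exact IsUnit.of_mul_eq_one _ h1

theorem stmt10 (R : Type u) [CommRing R] (G : Type u) [CommGroup G] [Finite G]
    (hfin : letI : Module (MonoidAlgebra R G) R := Module.compHom R (augmentation R G)
      HasFinProjDim (MonoidAlgebra R G) (ModuleCat.of (MonoidAlgebra R G) R))
    (n : ℕ) :
    (∀ (F : ModuleCat.{u} (MonoidAlgebra R G)), Module.Flat (MonoidAlgebra R G) F →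
      ProjDimLE (MonoidAlgebra R G) F n) ↔
    (∀ (F : ModuleCat.{u} R), Module.Flat R F → ProjDimLE R F n) := by
  have := Fintype.ofFinite G
  have hu := isUnit_of_fin R G hfin
  simp only [projDimLE_iff]
  constructor
  · intro h F hF
    have h1 : PD (MonoidAlgebra R G) (TensorProduct R (MonoidAlgebra R G) F) n :=
      h (ModuleCat.of _ (TensorProduct R (MonoidAlgebra R G) F)) (inferInstanceAs
        (Module.Flat (MonoidAlgebra R G) (TensorProduct R (MonoidAlgebra R G) F)))
    have h2 : PD R (TensorProduct R (MonoidAlgebra R G) F) n := PD_down n _ h1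
    let a : MonoidAlgebra R G →ₗ[R] R := ((MonoidAlgebra.lift R R G) 1).toLinearMap
    let ret : Retract F (ModuleCat.of R (TensorProduct R (MonoidAlgebra R G) F)) :=
      { i := ModuleCat.ofHom (TensorProduct.mk R (MonoidAlgebra R G) F 1)
        r := ModuleCat.ofHom ((TensorProduct.lid R F).toLinearMap ∘ₗ a.rTensor F)
        retract := by
          ext x
          simp [a] }
    have : HasProjectiveDimensionLT (ModuleCat.of R (TensorProduct R (MonoidAlgebra R G) F))
      (n + 1) := h2
    exact ret.hasProjectiveDimensionLT (n + 1)
  · intro h F hF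
    letI : Module R F := Module.compHom F (algebraMap R (MonoidAlgebra R G))
    haveI : IsScalarTower R (MonoidAlgebra R G) F := IsScalarTower.of_algebraMap_smul
      fun _ _ ↦ rfl
    have hF' : Module.Flat R F := Module.Flat.trans R (MonoidAlgebra R G) F
    exact PD_up (R := R) (A := MonoidAlgebra R G)
      (fun M _ _ _ _ hM ↦ projective_of_higman (higman_of_isUnit hu) hM) n F
      (h (ModuleCat.of R F) hF')

end
end

section
/- Let R be a commutative ring, G an abelian group, and RG the group ring of G over R; regard R as an RG-module via the augmentation map RG → R sending each element of G to 1. Suppose that R has projective dimension at most r as an RG-module, for some nonnegative integer r. Then every RG-module that is projective as an R-module has projective dimension at most r over RG. -/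
open CategoryTheory

noncomputable section

universe u

open CategoryTheory Limits MonoidalCategory

theorem aux_extVanish_iff (R : Type u) [CommRing R] (M N : ModuleCat.{u} R) (n : ℕ) :
    ExtVanish R M N (n + 1) ↔ Subsingleton (Abelian.Ext.{u} M N (n + 1)) := by
  obtain ⟨P⟩ := (inferInstance : HasProjectiveResolution M).out
  have h1 : ExtVanish R M N (n + 1) ↔
      ∀ f : P.complex.X (n + 1) ⟶ N, P.complex.d (n + 2) (n + 1) ≫ f = 0 →
        ∃ g : P.complex.X n ⟶ N, P.complex.d (n + 1) n ≫ g = f := by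
    unfold ExtVanish extGroup
    rw [← ModuleCat.isZero_iff_subsingleton, (P.isoExt (R := R) (n + 1) N).isZero_iff,
      ← HomologicalComplex.exactAt_iff_isZero_homology,
      HomologicalComplex.exactAt_iff' _ n (n + 1) (n + 2) (by simp) (by simp),
      ShortComplex.moduleCat_exact_iff]
    rfl
  rw [h1]
  constructor
  · intro h
    refine subsingleton_of_forall_eq 0 fun e => ?_
    obtain ⟨f, hf, rfl⟩ := P.extMk_surjective e (n + 2) rfl
    rw [P.extMk_eq_zero_iff f (n + 2) rfl hf n rfl]
    exact h f hf
  · intro h f hf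
    rw [← P.extMk_eq_zero_iff f (n + 2) rfl hf n rfl]
    exact Subsingleton.elim _ _

theorem aux_projDimLE_iff (R : Type u) [CommRing R] (M : ModuleCat.{u} R) (n : ℕ) :
    ProjDimLE R M n ↔ HasProjectiveDimensionLE M n := by
  rw [HasProjectiveDimensionLE, hasProjectiveDimensionLT_iff]
  constructor
  · intro h i hi Y e
    obtain ⟨j, rfl⟩ : ∃ j, i = j + 1 := ⟨i - 1, by omega⟩
    have := (aux_extVanish_iff R M Y j).1 (h Y _ (by omega))
    exact Subsingleton.elim _ _
  · intro h N j hj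
    obtain ⟨j, rfl⟩ : ∃ i, j = i + 1 := ⟨j - 1, by omega⟩
    rw [aux_extVanish_iff]
    exact subsingleton_of_forall_eq 0 fun e => h _ (by omega) e

universe v₁ v₂ u₁ u₂

theorem aux_pd_map {C : Type u₁} [Category.{v₁} C] [Abelian C] [EnoughProjectives C]
    {D : Type u₂} [Category.{v₂} D] [Abelian D] (F : C ⥤ D) [F.PreservesZeroMorphisms]
    [PreservesFiniteColimits F] [F.PreservesMonomorphisms]
    (hF : ∀ X : C, Projective X → Projective (F.obj X)) (n : ℕ) (X : C)
    (hX : HasProjectiveDimensionLE X n) : HasProjectiveDimensionLE (F.obj X) n := by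
  induction n generalizing X with
  | zero =>
    rw [← projective_iff_hasProjectiveDimensionLE_zero] at hX ⊢
    exact hF X hX
  | succ n ih =>
    obtain ⟨p⟩ := EnoughProjectives.presentation X
    have hp := p.projective
    have hep := p.epi
    let S := ShortComplex.mk _ _ (kernel.condition p.f)
    have hS : S.ShortExact := { exact := ShortComplex.exact_kernel p.f, mono_f := by dsimp [S]; infer_instance, epi_g := hep }
    have := hS.mono_f
    have := hS.epi_g
    have h1 : HasProjectiveDimensionLE S.X₁ n :=
      hS.hasProjectiveDimensionLT_X₁ (n + 1) (inferInstanceAs (HasProjectiveDimensionLT p.p (n+1))) hX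
    have hFS : (S.map F).ShortExact :=
      { exact := hS.exact.map_of_epi_of_preservesCokernel F hS.epi_g inferInstance
        mono_f := inferInstanceAs (Mono (F.map S.f))
        epi_g := inferInstanceAs (Epi (F.map S.g)) }
    have hP := hF _ hp
    exact hFS.hasProjectiveDimensionLT_X₃ (n + 1) (ih _ h1)
      (inferInstanceAs (HasProjectiveDimensionLT (F.obj p.p) (n+1+1)))

section
variable {k G : Type u} [CommRing k] [CommGroup G] (M : Rep.{u} k G) [Module.Projective k M]

theorem aux_tensor_mono : (tensorLeft M).PreservesMonomorphisms where
  preserves {X Y} f hf := by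
    rw [Rep.mono_iff_injective] at hf ⊢
    exact Module.Flat.lTensor_preserves_injective_linearMap (M := M) f.hom.toLinearMap hf

theorem aux_tensor_proj (X : Rep.{u} k G) (hX : Projective X) :
    Projective ((tensorLeft M).obj X) := by
  have : (ihom M).PreservesEpimorphisms := ⟨fun {Y Z} f hf => by
    rw [Rep.epi_iff_surjective] at hf ⊢
    intro g
    obtain ⟨h, hh⟩ := Module.projective_lifting_property f.hom.toLinearMap (show M →ₗ[k] Z from g) hf
    exact ⟨h, hh⟩⟩
  exact (ihom.adjunction M).map_projective X hX

theorem aux_tensor_pd (n : ℕ) (X : Rep.{u} k G)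
    (hX : HasProjectiveDimensionLE X n) : HasProjectiveDimensionLE (M ⊗ X) n := by
  have := aux_tensor_mono M
  have : (tensorLeft M).IsLeftAdjoint := (ihom.adjunction M).isLeftAdjoint
  exact aux_pd_map (tensorLeft M) (aux_tensor_proj M) n X hX

end

def aux_unitIso (R : Type u) [CommRing R] (G : Type u) [CommGroup G] :
    letI : Module (MonoidAlgebra R G) R := Module.compHom R (augmentation R G)
    ModuleCat.of (MonoidAlgebra R G) R ≅ Rep.toModuleMonoidAlgebra.obj (𝟙_ (Rep.{u} R G)) :=
  letI : Module (MonoidAlgebra R G) R := Module.compHom R (augmentation R G)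
  LinearEquiv.toModuleIso
    { (AddEquiv.refl R) with
      map_smul' := fun a x => by
        change augmentation R G a * x = (Representation.trivial R G R).asAlgebraHom a x
        induction a using MonoidAlgebra.induction_on with
        | of g => simp [augmentation]
        | add f g hf hg => simp [add_mul, hf, hg]
        | smul r f hf =>
          have h1 : augmentation R G (r • f) = r * augmentation R G f :=
            map_smul ((MonoidAlgebra.lift R R G) 1) r f
          have h2 : (Representation.trivial R G R).asAlgebraHom (r • f) x =
              r * (Representation.trivial R G R).asAlgebraHom f x := by
            rw [map_smul]; rfl
          rw [h1, h2, ← hf, mul_assoc] }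

theorem stmt11 (R : Type u) [CommRing R] (G : Type u) [CommGroup G] (r : ℕ)
    (hr : letI : Module (MonoidAlgebra R G) R := Module.compHom R (augmentation R G)
      ProjDimLE (MonoidAlgebra R G) (ModuleCat.of (MonoidAlgebra R G) R) r) :
    ∀ (M : ModuleCat.{u} (MonoidAlgebra R G)),
      (letI : Module R M := Module.compHom M (algebraMap R (MonoidAlgebra R G));
        Module.Projective R M) →
      ProjDimLE (MonoidAlgebra R G) M r := by
  intro M hM
  rw [aux_projDimLE_iff]
  have h1 := (aux_projDimLE_iff _ _ _).1 hr
  have h2 : HasProjectiveDimensionLE (Rep.toModuleMonoidAlgebra.obj (𝟙_ (Rep.{u} R G))) r :=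
    hasProjectiveDimensionLT_of_iso (aux_unitIso R G) _
  let E := Rep.equivalenceModuleMonoidAlgebra (k := R) (G := G)
  have h3 : HasProjectiveDimensionLE (E.inverse.obj (E.functor.obj (𝟙_ (Rep.{u} R G)))) r :=
    aux_pd_map E.inverse (fun X hX => (E.symm.map_projective_iff X).2 hX) r _ h2
  have h4 : HasProjectiveDimensionLE (𝟙_ (Rep.{u} R G)) r :=
    @hasProjectiveDimensionLT_of_iso _ _ _ _ _ (E.unitIso.app _).symm _ h3
  have : Module.Projective R (E.inverse.obj M) := hM
  have h5 := aux_tensor_pd (E.inverse.obj M) r _ h4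
  have h6 : HasProjectiveDimensionLE (E.inverse.obj M) r :=
    hasProjectiveDimensionLT_of_iso (ρ_ _) _
  have h7 : HasProjectiveDimensionLE (E.functor.obj (E.inverse.obj M)) r :=
    aux_pd_map E.functor (fun X hX => (E.map_projective_iff X).2 hX) r _ h6
  exact @hasProjectiveDimensionLT_of_iso _ _ _ _ _ (E.counitIso.app M) _ h7

end
end
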